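/- arXiv:1910.12442 — 10 statements merged into one kernel-verified Lean document; each statement's English description precedes it below -/
import Mathlib

section
/- With notation as in the context, the comultiplication ν̃ of the homotopical comonad K̃ = K∘F is coassociative: for every object X of 𝒞, ν̃_{K̃X} ∘ ν̃_X = K̃(ν̃_X) ∘ ν̃_X as maps K̃X → K̃(K̃(K̃X)). -/
/-!
STATEMENT 2: For a comonad `(K, ε, ν)` and a monad `(F, η, μ)` on `𝒞`, the comultiplication
`ν̃` of the homotopical comonad `K̃ = K ∘ F`, defined objectwise by
`ν̃_X := K (η_{K (F X)}) ∘ ν_{F X}`, is coassociative: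
`ν̃_{K̃X} ∘ ν̃_X = K̃ (ν̃_X) ∘ ν̃_X` for every object `X`.
-/

open CategoryTheory

universe v u

namespace Stmt2

variable {𝒞 : Type u} [Category.{v} 𝒞] (K : Comonad 𝒞) (F : Monad 𝒞)

/-- The homotopical comonad `K̃ = K ∘ F`, objectwise. -/
def KtObj (X : 𝒞) : 𝒞 := K.obj (F.obj X)

/-- The action of `K̃` on morphisms. -/
def KtMap {X Y : 𝒞} (f : X ⟶ Y) : KtObj K F X ⟶ KtObj K F Y :=
  K.map (F.map f)

/-- The comultiplication `ν̃_X := K (η_{K (F X)}) ∘ ν_{F X} : K(F X) → K(K(F X)) → K(F(K(F X)))`. -/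
def νt (X : 𝒞) : KtObj K F X ⟶ KtObj K F (KtObj K F X) :=
  K.δ.app (F.obj X) ≫ K.map (F.η.app (K.obj (F.obj X)))

/-- Coassociativity of `ν̃`: `ν̃_{K̃X} ∘ ν̃_X = K̃(ν̃_X) ∘ ν̃_X`. -/
theorem νt_coassoc (X : 𝒞) :
    νt K F X ≫ νt K F (KtObj K F X) = νt K F X ≫ KtMap K F (νt K F X) := by
  change (K.δ.app (F.obj X) ≫ K.map (F.η.app (K.obj (F.obj X)))) ≫
      (K.δ.app (F.obj (K.obj (F.obj X))) ≫
        K.map (F.η.app (K.obj (F.obj (K.obj (F.obj X)))))) =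
    (K.δ.app (F.obj X) ≫ K.map (F.η.app (K.obj (F.obj X)))) ≫
      K.map (F.map (K.δ.app (F.obj X) ≫ K.map (F.η.app (K.obj (F.obj X)))))
  have h1 := K.δ.naturality (F.η.app (K.obj (F.obj X)))
  have h2 := F.η.naturality (K.δ.app (F.obj X) ≫ K.map (F.η.app (K.obj (F.obj X))))
  have h3 := K.coassoc (F.obj X)
  dsimp only [Functor.id_obj, Functor.id_map, Functor.comp_obj, Functor.comp_map] at h1 h2 h3 ⊢
  rw [Category.assoc, Category.assoc, reassoc_of% h1, ← K.map_comp (F.η.app _), ← h2,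
    K.map_comp, K.map_comp, Category.assoc, reassoc_of% h3]

end Stmt2
end

section
/- With notation as in the context, the homotopical comonad K̃ = K∘F satisfies the right counit law: for every object X of 𝒞, K(μ_X) ∘ K(F(ε̃_X)) ∘ ν̃_X = id_{K̃X}, where K(F(ε̃_X)) : K(F(K(F X))) → K(F(F X)) and K(μ_X) : K(F(F X)) → K(F X). -/
/-!
STATEMENT 3: For a comonad `(K, ε, ν)` and a monad `(F, η, μ)` on `𝒞`, the homotopical comonad
`K̃ = K ∘ F` with comultiplication `ν̃_X := K (η_{K (F X)}) ∘ ν_{F X}` and counit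
`ε̃_X := ε_{F X} : K(F X) → F X` satisfies the right counit law:
`K (μ_X) ∘ K (F (ε̃_X)) ∘ ν̃_X = id_{K̃X}` for every object `X`.
-/

open CategoryTheory

universe v u

namespace Stmt3

variable {𝒞 : Type u} [Category.{v} 𝒞] (K : Comonad 𝒞) (F : Monad 𝒞)

/-- The homotopical comonad `K̃ = K ∘ F`, objectwise. -/
def KtObj (X : 𝒞) : 𝒞 := K.obj (F.obj X)

/-- The comultiplication `ν̃_X := K (η_{K (F X)}) ∘ ν_{F X}`. -/
def νt (X : 𝒞) : KtObj K F X ⟶ KtObj K F (KtObj K F X) :=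
  K.δ.app (F.obj X) ≫ K.map (F.η.app (K.obj (F.obj X)))

/-- The counit `ε̃_X := ε_{F X} : K (F X) → F X`. -/
def εt (X : 𝒞) : KtObj K F X ⟶ F.obj X :=
  K.ε.app (F.obj X)

/-- The right counit law: `K(μ_X) ∘ K(F(ε̃_X)) ∘ ν̃_X = id`. -/
theorem νt_right_counit (X : 𝒞) :
    νt K F X ≫ K.map (F.map (εt K F X)) ≫ K.map (F.μ.app X) = 𝟙 (KtObj K F X) := by
  have h : F.η.app (K.obj (F.obj X)) ≫ F.map (K.ε.app (F.obj X)) ≫ F.μ.app X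
      = K.ε.app (F.obj X) := by
    have hn := F.η.naturality (K.ε.app (F.obj X))
    simp only [Functor.id_map] at hn
    have hu := F.left_unit X
    rw [← Category.assoc]
    erw [← hn]
    rw [Category.assoc]
    erw [hu]
    exact Category.comp_id _
  change (K.δ.app (F.obj X) ≫ K.map (F.η.app (K.obj (F.obj X)))) ≫
    K.map (F.map (K.ε.app (F.obj X))) ≫ K.map (F.μ.app X) = 𝟙 (K.obj (F.obj X))
  rw [Category.assoc]
  refine Eq.trans ?_ (K.right_counit (F.obj X))
  congr 1
  refine Eq.trans ?_ (congrArg K.map h)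
  rw [K.map_comp, K.map_comp]

end Stmt3
end

section
/- With notation as in the context, the homotopical comonad K̃ = K∘F satisfies the F-twisted left counit law: for every object X of 𝒞, μ_{K̃X} ∘ F(ε̃_{K̃X}) ∘ F(ν̃_X) = id_{F(K̃X)}, where F(ν̃_X) : F(K̃X) → F(K̃(K̃X)), F(ε̃_{K̃X}) : F(K̃(K̃X)) → F(F(K̃X)), and μ_{K̃X} : F(F(K̃X)) → F(K̃X). -/
/-!
STATEMENT 4: For a comonad `(K, ε, ν)` and a monad `(F, η, μ)` on `𝒞`, the homotopical comonad
`K̃ = K ∘ F` with comultiplication `ν̃_X := K (η_{K (F X)}) ∘ ν_{F X}` and counit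
`ε̃_X := ε_{F X}` satisfies the `F`-twisted left counit law:
`μ_{K̃X} ∘ F (ε̃_{K̃X}) ∘ F (ν̃_X) = id_{F (K̃X)}` for every object `X`.
-/

open CategoryTheory

universe v u

namespace Stmt4

variable {𝒞 : Type u} [Category.{v} 𝒞] (K : Comonad 𝒞) (F : Monad 𝒞)

/-- The homotopical comonad `K̃ = K ∘ F`, objectwise. -/
def KtObj (X : 𝒞) : 𝒞 := K.obj (F.obj X)

/-- The comultiplication `ν̃_X := K (η_{K (F X)}) ∘ ν_{F X}`. -/
def νt (X : 𝒞) : KtObj K F X ⟶ KtObj K F (KtObj K F X) :=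
  K.δ.app (F.obj X) ≫ K.map (F.η.app (K.obj (F.obj X)))

/-- The counit `ε̃_X := ε_{F X} : K (F X) → F X`. -/
def εt (X : 𝒞) : KtObj K F X ⟶ F.obj X :=
  K.ε.app (F.obj X)

/-- The `F`-twisted left counit law: `μ_{K̃X} ∘ F(ε̃_{K̃X}) ∘ F(ν̃_X) = id_{F(K̃X)}`. -/
theorem νt_left_counit (X : 𝒞) :
    F.map (νt K F X) ≫ F.map (εt K F (KtObj K F X)) ≫ F.μ.app (KtObj K F X)
      = 𝟙 (F.obj (KtObj K F X)) := by
  have h : νt K F X ≫ εt K F (KtObj K F X) = F.η.app (KtObj K F X) := by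
    change (K.δ.app (F.obj X) ≫ K.map (F.η.app (K.obj (F.obj X)))) ≫
      K.ε.app (F.obj (K.obj (F.obj X))) = F.η.app (K.obj (F.obj X))
    have n := K.ε.naturality (F.η.app (K.obj (F.obj X)))
    have l := K.left_counit (F.obj X)
    simp only [Functor.id_map, Functor.id_obj] at n l
    erw [Category.assoc, n, ← Category.assoc, l, Category.id_comp]
  rw [← Category.assoc, ← F.map_comp, h]
  exact F.right_unit _

end Stmt4
end

section
/- With notation as in the context, the homotopical monad T̃ = T∘C satisfies the C-twisted left unit law: for every object X of 𝒞, C(μ̃_X) ∘ C(η̃_{T̃X}) ∘ ν_{T̃X} = id_{C(T̃X)}, where ν_{T̃X} : C(T̃X) → C(C(T̃X)), C(η̃_{T̃X}) : C(C(T̃X)) → C(T(C(T̃X))) = C(T̃(T̃X)), and C(μ̃_X) : C(T̃(T̃X)) → C(T̃X). -/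
/-!
STATEMENT 7: For a monad `(T, η, μ)` and a comonad `(C, ε, ν)` on `𝒞`, the homotopical monad
`T̃ = T ∘ C` with multiplication `μ̃_X := μ_{C X} ∘ T (ε_{T (C X)})` and unit
`η̃_X := η_{C X}` satisfies the `C`-twisted left unit law:
`C (μ̃_X) ∘ C (η̃_{T̃X}) ∘ ν_{T̃X} = id_{C (T̃X)}` for every object `X`.
-/

open CategoryTheory

universe v u

namespace Stmt7

variable {𝒞 : Type u} [Category.{v} 𝒞] (T : Monad 𝒞) (C : Comonad 𝒞)

/-- The homotopical monad `T̃ = T ∘ C`, objectwise. -/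
def TtObj (X : 𝒞) : 𝒞 := T.obj (C.obj X)

/-- The multiplication `μ̃_X := μ_{C X} ∘ T (ε_{T (C X)})`. -/
def μt (X : 𝒞) : TtObj T C (TtObj T C X) ⟶ TtObj T C X :=
  T.map (C.ε.app (T.obj (C.obj X))) ≫ T.μ.app (C.obj X)

/-- The unit `η̃_X := η_{C X} : C X → T (C X)`. -/
def ηt (X : 𝒞) : C.obj X ⟶ TtObj T C X :=
  T.η.app (C.obj X)

/-- The `C`-twisted left unit law: `C(μ̃_X) ∘ C(η̃_{T̃X}) ∘ ν_{T̃X} = id_{C(T̃X)}`. -/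
theorem μt_left_unit (X : 𝒞) :
    C.δ.app (TtObj T C X) ≫ C.map (ηt T C (TtObj T C X)) ≫ C.map (μt T C X)
      = 𝟙 (C.obj (TtObj T C X)) := by
  have h : ηt T C (TtObj T C X) ≫ μt T C X = C.ε.app (TtObj T C X) := by
    change T.η.app (C.obj (T.obj (C.obj X))) ≫ T.map (C.ε.app (T.obj (C.obj X))) ≫
      T.μ.app (C.obj X) = C.ε.app (T.obj (C.obj X))
    have hn := T.η.naturality (C.ε.app (T.obj (C.obj X)))
    simp only [Functor.id_map] at hn
    rw [← Category.assoc, ← hn, Category.assoc]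
    exact (congrArg (fun f => C.ε.app (T.obj (C.obj X)) ≫ f) (T.left_unit (C.obj X))).trans
      (Category.comp_id _)
  rw [← C.map_comp, h]
  exact C.right_counit _

end Stmt7
end

section
/- With notation as in the context, for every object X of 𝒞 the pair (Σ(C X), m_X) is a homotopy K̃-coalgebra, where m_X : Σ(C X) → K̃(Σ(C X)) is the composite Σ(C(Ω(η_{Σ(C X)}))) ∘ Σ(C(u_{C X})) ∘ Σ(ν_X) : Σ(C X) → Σ(C(C X)) → Σ(C(Ω(Σ(C X)))) → Σ(C(Ω(F(Σ(C X))))); that is, ν̃_{Σ(C X)} ∘ m_X = K̃(m_X) ∘ m_X and μ_{Σ(C X)} ∘ F(ε̃_{Σ(C X)}) ∘ F(m_X) = id_{F(Σ(C X))}. (In the paper this is the claim that Σ̃ʳX is a homotopy K̃-coalgebra via the Freudenthal suspension map.) -/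
/-!
STATEMENT 8: Let `Σ ⊣ Ω` be an adjunction of endofunctors of `𝒞` (unit `u`, counit `v`),
`(C, ε, ν)` a comonad and `(F, η, μ)` a monad on `𝒞`. Let `K̃ X = Σ(C(Ω(F X)))` with the
comultiplication `ν̃` and counit `ε̃` described in the paper. Then for every object `X`,
the pair `(Σ(C X), m_X)` with
`m_X := Σ(C(Ω(η_{Σ(C X)}))) ∘ Σ(C(u_{C X})) ∘ Σ(ν_X)` is a homotopy `K̃`-coalgebra:
`ν̃_{Σ(C X)} ∘ m_X = K̃(m_X) ∘ m_X` and `μ_{Σ(C X)} ∘ F(ε̃_{Σ(C X)}) ∘ F(m_X) = id_{F(Σ(C X))}`.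
-/

open CategoryTheory

universe v u

namespace Stmt8

variable {𝒞 : Type u} [Category.{v} 𝒞] (Sg Om : 𝒞 ⥤ 𝒞) (adj : Sg ⊣ Om)
variable (C : Comonad 𝒞) (F : Monad 𝒞)

/-- The homotopical comonad `K̃`, objectwise `K̃ X = Σ(C(Ω(F X)))`. -/
def KtObj (X : 𝒞) : 𝒞 := Sg.obj (C.obj (Om.obj (F.obj X)))

/-- The action of `K̃` on morphisms. -/
def KtMap {X Y : 𝒞} (f : X ⟶ Y) : KtObj Sg Om C F X ⟶ KtObj Sg Om C F Y :=
  Sg.map (C.map (Om.map (F.map f)))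

/-- The comultiplication
`ν̃_X := Σ(C(Ω(η_{Σ(C(Ω(F X)))}))) ∘ Σ(C(u_{C(Ω(F X))})) ∘ Σ(ν_{Ω(F X)})`. -/
def νt (X : 𝒞) : KtObj Sg Om C F X ⟶ KtObj Sg Om C F (KtObj Sg Om C F X) :=
  Sg.map (C.δ.app (Om.obj (F.obj X))) ≫
    Sg.map (C.map (adj.unit.app (C.obj (Om.obj (F.obj X))))) ≫
      Sg.map (C.map (Om.map (F.η.app (KtObj Sg Om C F X))))

/-- The counit `ε̃_X := v_{F X} ∘ Σ(ε_{Ω(F X)}) : Σ(C(Ω(F X))) → Σ(Ω(F X)) → F X`. -/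
def εt (X : 𝒞) : KtObj Sg Om C F X ⟶ F.obj X :=
  Sg.map (C.ε.app (Om.obj (F.obj X))) ≫ adj.counit.app (F.obj X)

/-- The Freudenthal suspension map
`m_X := Σ(C(Ω(η_{Σ(C X)}))) ∘ Σ(C(u_{C X})) ∘ Σ(ν_X) : Σ(C X) → K̃(Σ(C X))`. -/
def m (X : 𝒞) : Sg.obj (C.obj X) ⟶ KtObj Sg Om C F (Sg.obj (C.obj X)) :=
  Sg.map (C.δ.app X) ≫
    Sg.map (C.map (adj.unit.app (C.obj X))) ≫
      Sg.map (C.map (Om.map (F.η.app (Sg.obj (C.obj X)))))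

/-- `(Σ(C X), m_X)` is a homotopy `K̃`-coalgebra: the coassociativity condition
`ν̃_{Σ(C X)} ∘ m_X = K̃(m_X) ∘ m_X` and the counit condition
`μ_{Σ(C X)} ∘ F(ε̃_{Σ(C X)}) ∘ F(m_X) = id_{F(Σ(C X))}` hold. -/
theorem suspension_is_homotopy_coalgebra (X : 𝒞) :
    (m Sg Om adj C F X ≫ νt Sg Om adj C F (Sg.obj (C.obj X))
      = m Sg Om adj C F X ≫ KtMap Sg Om C F (m Sg Om adj C F X)) ∧
    (F.map (m Sg Om adj C F X) ≫ F.map (εt Sg Om adj C F (Sg.obj (C.obj X))) ≫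
        F.μ.app (Sg.obj (C.obj X))
      = 𝟙 (F.obj (Sg.obj (C.obj X)))) := by
  have nat : ∀ {Y Z : 𝒞} (f : Y ⟶ Z),
      f ≫ adj.unit.app Z ≫ Om.map (F.η.app (Sg.obj Z)) =
        (adj.unit.app Y ≫ Om.map (F.η.app (Sg.obj Y))) ≫ Om.map (F.map (Sg.map f)) := by
    intro Y Z f
    have h1 := adj.unit.naturality f
    have h2 := F.η.naturality (Sg.map f)
    dsimp at h1 h2
    rw [Category.assoc, ← Om.map_comp, ← h2, Om.map_comp, reassoc_of% h1]
  have hm : m Sg Om adj C F X = Sg.map (C.δ.app X ≫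
      C.map (adj.unit.app (C.obj X) ≫ Om.map (F.η.app (Sg.obj (C.obj X))))) := by
    simp only [m, Functor.map_comp]
    rfl
  have hν : νt Sg Om adj C F (Sg.obj (C.obj X)) =
      Sg.map (C.δ.app (Om.obj (F.obj (Sg.obj (C.obj X)))) ≫
        C.map (adj.unit.app (C.obj (Om.obj (F.obj (Sg.obj (C.obj X))))) ≫
          Om.map (F.η.app (Sg.obj (C.obj (Om.obj (F.obj (Sg.obj (C.obj X))))))))) := by
    simp only [νt, Functor.map_comp]
    rfl
  constructor
  · rw [hν, hm]
    unfold KtMap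
    unfold KtObj
    rw [← Sg.map_comp, ← Sg.map_comp]
    congr 1
    have h1 := C.δ.naturality (adj.unit.app (C.obj X) ≫ Om.map (F.η.app (Sg.obj (C.obj X))))
    have h2 := C.coassoc X
    dsimp only [Functor.comp_obj, Functor.comp_map, Functor.id_obj] at h1 h2 ⊢
    rw [Category.assoc, reassoc_of% h1, ← reassoc_of% h2, Category.assoc, ← C.map_comp,
      ← C.map_comp, ← C.map_comp]
    congr 2
    rw [← nat, Category.assoc]
  · have key : m Sg Om adj C F X ≫ εt Sg Om adj C F (Sg.obj (C.obj X)) =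
        F.η.app (Sg.obj (C.obj X)) := by
      rw [hm]
      unfold εt KtObj
      have h1 := C.ε.naturality (adj.unit.app (C.obj X) ≫ Om.map (F.η.app (Sg.obj (C.obj X))))
      have h2 := C.right_counit X
      have h3 := C.left_counit X
      dsimp only [Functor.comp_obj, Functor.comp_map, Functor.id_obj, Functor.id_map] at h1 h2 h3 ⊢
      rw [← Sg.map_comp_assoc, Category.assoc, h1, reassoc_of% h3, Sg.map_comp, Category.assoc]
      have h4 := adj.counit.naturality (F.η.app (Sg.obj (C.obj X)))
      have h5 := adj.left_triangle_components (C.obj X)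
      dsimp only [Functor.comp_obj, Functor.comp_map, Functor.id_obj, Functor.id_map] at h4 h5 ⊢
      rw [h4, reassoc_of% h5]
    rw [← F.map_comp_assoc, key]
    exact F.right_unit _

end Stmt8
end

section
/- With notation as in the context, for every object Y of 𝒞 the pair (Ω(F Y), m_Y) is a homotopy T̃-algebra, where m_Y : T̃(Ω(F Y)) → Ω(F Y) is the composite Ω(μ_Y) ∘ Ω(F(v_{F Y})) ∘ Ω(F(Σ(ε_{Ω(F Y)}))) : Ω(F(Σ(C(Ω(F Y))))) → Ω(F(Σ(Ω(F Y)))) → Ω(F(F Y)) → Ω(F Y); that is, m_Y ∘ μ̃_{Ω(F Y)} = m_Y ∘ T̃(m_Y) and C(m_Y) ∘ C(η̃_{Ω(F Y)}) ∘ ν_{Ω(F Y)} = id_{C(Ω(F Y))}. (In the paper this is the claim that Ω̃ʳY is a homotopy T̃-algebra via the dual Freudenthal suspension map.) -/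
/-!
STATEMENT 9: Let `Σ ⊣ Ω` be an adjunction of endofunctors of `𝒞` (unit `u`, counit `v`),
`(C, ε, ν)` a comonad and `(F, η, μ)` a monad on `𝒞`. Let `T̃ X = Ω(F(Σ(C X)))` with the
multiplication `μ̃` and unit `η̃` described in the paper. Then for every object `Y`, the pair
`(Ω(F Y), m_Y)` with `m_Y := Ω(μ_Y) ∘ Ω(F(v_{F Y})) ∘ Ω(F(Σ(ε_{Ω(F Y)})))` is a homotopy
`T̃`-algebra: `m_Y ∘ μ̃_{Ω(F Y)} = m_Y ∘ T̃(m_Y)` and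
`C(m_Y) ∘ C(η̃_{Ω(F Y)}) ∘ ν_{Ω(F Y)} = id_{C(Ω(F Y))}`.
-/

open CategoryTheory

universe v u

namespace Stmt9

variable {𝒞 : Type u} [Category.{v} 𝒞] (Sg Om : 𝒞 ⥤ 𝒞) (adj : Sg ⊣ Om)
variable (C : Comonad 𝒞) (F : Monad 𝒞)

/-- The homotopical monad `T̃`, objectwise `T̃ X = Ω(F(Σ(C X)))`. -/
def TtObj (X : 𝒞) : 𝒞 := Om.obj (F.obj (Sg.obj (C.obj X)))

/-- The action of `T̃` on morphisms. -/
def TtMap {X Y : 𝒞} (f : X ⟶ Y) : TtObj Sg Om C F X ⟶ TtObj Sg Om C F Y :=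
  Om.map (F.map (Sg.map (C.map f)))

/-- The multiplication
`μ̃_X := Ω(μ_{Σ(C X)}) ∘ Ω(F(v_{F(Σ(C X))})) ∘ Ω(F(Σ(ε_{Ω(F(Σ(C X)))})))`. -/
def μt (X : 𝒞) : TtObj Sg Om C F (TtObj Sg Om C F X) ⟶ TtObj Sg Om C F X :=
  Om.map (F.map (Sg.map (C.ε.app (TtObj Sg Om C F X)))) ≫
    Om.map (F.map (adj.counit.app (F.obj (Sg.obj (C.obj X))))) ≫
      Om.map (F.μ.app (Sg.obj (C.obj X)))

/-- The unit `η̃_X := Ω(η_{Σ(C X)}) ∘ u_{C X} : C X → Ω(Σ(C X)) → Ω(F(Σ(C X)))`. -/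
def ηt (X : 𝒞) : C.obj X ⟶ TtObj Sg Om C F X :=
  adj.unit.app (C.obj X) ≫ Om.map (F.η.app (Sg.obj (C.obj X)))

/-- The dual Freudenthal suspension map
`m_Y := Ω(μ_Y) ∘ Ω(F(v_{F Y})) ∘ Ω(F(Σ(ε_{Ω(F Y)}))) : T̃(Ω(F Y)) → Ω(F Y)`. -/
def m (Y : 𝒞) : TtObj Sg Om C F (Om.obj (F.obj Y)) ⟶ Om.obj (F.obj Y) :=
  Om.map (F.map (Sg.map (C.ε.app (Om.obj (F.obj Y))))) ≫
    Om.map (F.map (adj.counit.app (F.obj Y))) ≫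
      Om.map (F.μ.app Y)

/-- `(Ω(F Y), m_Y)` is a homotopy `T̃`-algebra: the associativity condition
`m_Y ∘ μ̃_{Ω(F Y)} = m_Y ∘ T̃(m_Y)` and the unit condition
`C(m_Y) ∘ C(η̃_{Ω(F Y)}) ∘ ν_{Ω(F Y)} = id_{C(Ω(F Y))}` hold. -/
theorem loops_is_homotopy_algebra (Y : 𝒞) :
    (μt Sg Om adj C F (Om.obj (F.obj Y)) ≫ m Sg Om adj C F Y
      = TtMap Sg Om C F (m Sg Om adj C F Y) ≫ m Sg Om adj C F Y) ∧
    (C.δ.app (Om.obj (F.obj Y)) ≫ C.map (ηt Sg Om adj C F (Om.obj (F.obj Y))) ≫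
        C.map (m Sg Om adj C F Y)
      = 𝟙 (C.obj (Om.obj (F.obj Y)))) := by
  have key : F.μ.app (Sg.obj (C.obj (Om.obj (F.obj Y)))) ≫
      F.map (Sg.map (C.ε.app (Om.obj (F.obj Y))) ≫ adj.counit.app (F.obj Y)) ≫ F.μ.app Y
      = F.map (F.map (Sg.map (C.ε.app (Om.obj (F.obj Y))) ≫ adj.counit.app (F.obj Y)) ≫
          F.μ.app Y) ≫ F.μ.app Y := by
    have h := F.μ.naturality (Sg.map (C.ε.app (Om.obj (F.obj Y))) ≫ adj.counit.app (F.obj Y))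
    rw [← Category.assoc]
    erw [← h]
    rw [F.map_comp (F.map _) (F.μ.app Y), Category.assoc, Category.assoc, F.assoc Y]
    rfl
  have hm : m Sg Om adj C F Y = Om.map (F.map (Sg.map (C.ε.app (Om.obj (F.obj Y))) ≫
      adj.counit.app (F.obj Y)) ≫ F.μ.app Y) := by
    simp [m]
    rfl
  have hunit : ηt Sg Om adj C F (Om.obj (F.obj Y)) ≫ m Sg Om adj C F Y
      = C.ε.app (Om.obj (F.obj Y)) := by
    have h := F.η.naturality (Sg.map (C.ε.app (Om.obj (F.obj Y))) ≫ adj.counit.app (F.obj Y))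
    have h2 : F.η.app (Sg.obj (C.obj (Om.obj (F.obj Y)))) ≫
        F.map (Sg.map (C.ε.app (Om.obj (F.obj Y))) ≫ adj.counit.app (F.obj Y)) ≫ F.μ.app Y
        = Sg.map (C.ε.app (Om.obj (F.obj Y))) ≫ adj.counit.app (F.obj Y) := by
      rw [← Category.assoc]
      erw [← h]
      rw [Category.assoc]
      erw [F.left_unit Y]
      exact Category.comp_id _
    rw [hm]
    have h3 : (adj.unit.app (C.obj (Om.obj (F.obj Y))) ≫
        Om.map (F.η.app (Sg.obj (C.obj (Om.obj (F.obj Y)))))) ≫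
        Om.map (F.map (Sg.map (C.ε.app (Om.obj (F.obj Y))) ≫ adj.counit.app (F.obj Y)) ≫
          F.μ.app Y) = C.ε.app (Om.obj (F.obj Y)) := by
      rw [Category.assoc]
      erw [← Om.map_comp, h2]
      simp
    exact h3
  constructor
  · rw [hm]
    generalize hK : F.map (Sg.map (C.ε.app (Om.obj (F.obj Y))) ≫ adj.counit.app (F.obj Y)) ≫
      F.μ.app Y = K at *
    have hn : Sg.map (C.map (Om.map K)) ≫ Sg.map (C.ε.app (Om.obj (F.obj Y))) ≫
        adj.counit.app (F.obj Y) = Sg.map (C.ε.app _) ≫ adj.counit.app _ ≫ K := by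
      have h1 := C.ε.naturality (Om.map K)
      have h2 := adj.counit.naturality K
      dsimp at h1 h2
      rw [← Sg.map_comp_assoc, h1, Sg.map_comp_assoc, h2]
    unfold μt TtMap TtObj
    simp only [← Om.map_comp]
    congr 1
    simp only [Category.assoc]
    rw [key, ← hK, ← F.map_comp_assoc (Sg.map (C.map _)), hK, hn]
    simp
  · rw [← C.map_comp, hunit]
    exact C.right_counit _

end Stmt9
end

section
/- With notation as in the context, the maps ρ make G = C∘Ω∘F a right homotopical K̃-comodule: for every object X of 𝒞, (a) ρ_{K̃X} ∘ ρ_X = G(ν̃_X) ∘ ρ_X as maps G X → G(K̃(K̃X)), and (b) C(Ω(μ_X)) ∘ G(ε̃_X) ∘ ρ_X = id_{G X}, where G(ε̃_X) : G(K̃X) = C(Ω(F(K̃X))) → C(Ω(F(F X))) and C(Ω(μ_X)) : C(Ω(F(F X))) → G X. (In the paper this is the claim that C Ω̃ʳ has a right K̃-action, used to form the cobar construction 𝔠(Y) = Cobar(C Ω̃ʳ, K̃, Y).) -/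
/-!
STATEMENT 10: Let `Σ ⊣ Ω` be an adjunction of endofunctors of `𝒞` (unit `u`, counit `v`),
`(C, ε, ν)` a comonad and `(F, η, μ)` a monad on `𝒞`. Let `K̃ X = Σ(C(Ω(F X)))` with
comultiplication `ν̃` and counit `ε̃`, and let `G X = C(Ω(F X))` with
`ρ_X := C(Ω(η_{Σ(C(Ω(F X)))})) ∘ C(u_{C(Ω(F X))}) ∘ ν_{Ω(F X)} : G X → G(K̃X)`.
Then `ρ` makes `G` a right homotopical `K̃`-comodule: for every `X`,
(a) `ρ_{K̃X} ∘ ρ_X = G(ν̃_X) ∘ ρ_X`, and (b) `C(Ω(μ_X)) ∘ G(ε̃_X) ∘ ρ_X = id_{G X}`.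
-/

open CategoryTheory

universe v u

namespace Stmt10

variable {𝒞 : Type u} [Category.{v} 𝒞] (Sg Om : 𝒞 ⥤ 𝒞) (adj : Sg ⊣ Om)
variable (C : Comonad 𝒞) (F : Monad 𝒞)

/-- The homotopical comonad `K̃`, objectwise `K̃ X = Σ(C(Ω(F X)))`. -/
def KtObj (X : 𝒞) : 𝒞 := Sg.obj (C.obj (Om.obj (F.obj X)))

/-- The comultiplication
`ν̃_X := Σ(C(Ω(η_{Σ(C(Ω(F X)))}))) ∘ Σ(C(u_{C(Ω(F X))})) ∘ Σ(ν_{Ω(F X)})`. -/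
def νt (X : 𝒞) : KtObj Sg Om C F X ⟶ KtObj Sg Om C F (KtObj Sg Om C F X) :=
  Sg.map (C.δ.app (Om.obj (F.obj X))) ≫
    Sg.map (C.map (adj.unit.app (C.obj (Om.obj (F.obj X))))) ≫
      Sg.map (C.map (Om.map (F.η.app (KtObj Sg Om C F X))))

/-- The counit `ε̃_X := v_{F X} ∘ Σ(ε_{Ω(F X)}) : Σ(C(Ω(F X))) → Σ(Ω(F X)) → F X`. -/
def εt (X : 𝒞) : KtObj Sg Om C F X ⟶ F.obj X :=
  Sg.map (C.ε.app (Om.obj (F.obj X))) ≫ adj.counit.app (F.obj X)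

/-- The endofunctor `G`, objectwise `G X = C(Ω(F X))`. -/
def GObj (X : 𝒞) : 𝒞 := C.obj (Om.obj (F.obj X))

/-- The action of `G` on morphisms. -/
def GMap {X Y : 𝒞} (f : X ⟶ Y) : GObj Om C F X ⟶ GObj Om C F Y :=
  C.map (Om.map (F.map f))

/-- The right coaction
`ρ_X := C(Ω(η_{Σ(C(Ω(F X)))})) ∘ C(u_{C(Ω(F X))}) ∘ ν_{Ω(F X)} : G X → G(K̃X)`. -/
def ρ (X : 𝒞) : GObj Om C F X ⟶ GObj Om C F (KtObj Sg Om C F X) :=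
  C.δ.app (Om.obj (F.obj X)) ≫
    C.map (adj.unit.app (C.obj (Om.obj (F.obj X)))) ≫
      C.map (Om.map (F.η.app (KtObj Sg Om C F X)))

theorem phi_nat {Y Z : 𝒞} (f : Y ⟶ Z) :
    (adj.unit.app Y ≫ Om.map (F.η.app (Sg.obj Y))) ≫ Om.map (F.map (Sg.map f)) =
      f ≫ (adj.unit.app Z ≫ Om.map (F.η.app (Sg.obj Z))) := by
  have h := F.η.naturality (Sg.map f)
  have h2 := adj.unit.naturality f
  simp only [Functor.id_map, Functor.comp_map] at h h2
  rw [Category.assoc, ← Om.map_comp]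
  erw [← h]
  rw [Om.map_comp, ← Category.assoc]
  erw [← h2]
  rw [Category.assoc]

theorem phi_counit (X : 𝒞) :
    (adj.unit.app (Om.obj (F.obj X)) ≫ Om.map (F.η.app (Sg.obj (Om.obj (F.obj X))))) ≫
      Om.map (F.map (adj.counit.app (F.obj X))) ≫ Om.map (F.μ.app X) = 𝟙 _ := by
  have h := F.η.naturality (adj.counit.app (F.obj X))
  have h2 := F.left_unit X
  simp only [Functor.id_map] at h
  have h3 : F.η.app (Sg.obj (Om.obj (F.obj X))) ≫ F.map (adj.counit.app (F.obj X)) ≫ F.μ.app X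
      = adj.counit.app (F.obj X) := by
    rw [← Category.assoc]
    erw [← h]
    rw [Category.assoc]
    erw [h2]
    exact Category.comp_id _
  have h4 := congrArg (fun t => Om.map t) h3
  simp only [Functor.map_comp] at h4
  rw [Category.assoc]
  erw [h4]
  exact adj.right_triangle_components (F.obj X)

/-- Coassociativity in abstract form. -/
theorem coassoc_aux {A B D : 𝒞} (p : C.obj A ⟶ B) (q : C.obj B ⟶ D) (r : B ⟶ D)
    (h : p ≫ r = (C.δ.app A ≫ C.map p) ≫ q) :
    (C.δ.app A ≫ C.map p) ≫ (C.δ.app B ≫ C.map q) = (C.δ.app A ≫ C.map p) ≫ C.map r := by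
  have n := C.δ.naturality p
  simp only [Functor.comp_map] at n
  have ca := C.coassoc A
  rw [Category.assoc, Category.assoc, ← C.map_comp p r, h, C.map_comp, C.map_comp,
    reassoc_of% n, ← reassoc_of% ca, Category.assoc]

theorem counit_aux {A B : 𝒞} (p : C.obj A ⟶ B) (r : B ⟶ A) (h : p ≫ r = C.ε.app A) :
    (C.δ.app A ≫ C.map p) ≫ C.map r = 𝟙 (C.obj A) := by
  rw [Category.assoc, ← C.map_comp, h]
  exact C.right_counit A

theorem ρ_eq (X : 𝒞) : ρ Sg Om adj C F X = C.δ.app (Om.obj (F.obj X)) ≫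
    C.map (adj.unit.app (C.obj (Om.obj (F.obj X))) ≫
      Om.map (F.η.app (Sg.obj (C.obj (Om.obj (F.obj X)))))) := by
  rw [C.map_comp]; rfl

theorem νt_eq (X : 𝒞) : νt Sg Om adj C F X = Sg.map (ρ Sg Om adj C F X) := by
  unfold νt ρ
  erw [Sg.map_comp, Sg.map_comp]
  rfl

/-- `ρ` makes `G = C∘Ω∘F` a right homotopical `K̃`-comodule:
(a) `ρ_{K̃X} ∘ ρ_X = G(ν̃_X) ∘ ρ_X` and (b) `C(Ω(μ_X)) ∘ G(ε̃_X) ∘ ρ_X = id_{G X}`. -/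
theorem G_is_right_comodule (X : 𝒞) :
    (ρ Sg Om adj C F X ≫ ρ Sg Om adj C F (KtObj Sg Om C F X)
      = ρ Sg Om adj C F X ≫ GMap Om C F (νt Sg Om adj C F X)) ∧
    (ρ Sg Om adj C F X ≫ GMap Om C F (εt Sg Om adj C F X) ≫ C.map (Om.map (F.μ.app X))
      = 𝟙 (GObj Om C F X)) := by
  constructor
  · have n := phi_nat Sg Om adj F (ρ Sg Om adj C F X)
    rw [νt_eq, ρ_eq Sg Om adj C F (KtObj Sg Om C F X)]
    rw [ρ_eq] at n ⊢
    exact coassoc_aux C _ _ _ n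
  · have n := phi_nat Sg Om adj F (C.ε.app (Om.obj (F.obj X)))
    have c := phi_counit Sg Om adj F X
    have e : GMap Om C F (εt Sg Om adj C F X) ≫ C.map (Om.map (F.μ.app X)) =
        C.map (Om.map (F.map (Sg.map (C.ε.app (Om.obj (F.obj X))))) ≫
          Om.map (F.map (adj.counit.app (F.obj X))) ≫ Om.map (F.μ.app X)) := by
      unfold GMap εt
      erw [F.map_comp, Om.map_comp, C.map_comp, C.map_comp, C.map_comp, Category.assoc]
      rfl
    rw [e, ρ_eq]
    refine counit_aux C _ _ ?_
    refine (Category.assoc _ _ _).symm.trans ?_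
    refine (congrArg (· ≫ _) n).trans ?_
    refine (Category.assoc _ _ _).trans ?_
    refine (congrArg (_ ≫ ·) c).trans ?_
    exact Category.comp_id _

end Stmt10
end

section
/- With notation as in the context, the maps σ make H = F∘Σ∘C a right homotopical T̃-module: for every object X of 𝒞, (a) σ_X ∘ H(μ̃_X) = σ_X ∘ σ_{T̃X} as maps H(T̃(T̃X)) → H X, and (b) σ_X ∘ ŝ_X = id_{H X}, where ŝ_X : H X → H(T̃X) is the composite F(Σ(C(Ω(η_{Σ(C X)})))) ∘ F(Σ(C(u_{C X}))) ∘ F(Σ(ν_X)). (In the paper this is the claim that F Σ̃ʳ has a right T̃-action, used to form the bar construction 𝔟(X) = Bar(F Σ̃ʳ, T̃, X).) -/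
/-!
STATEMENT 11: Let `Σ ⊣ Ω` be an adjunction of endofunctors of `𝒞` (unit `u`, counit `v`),
`(C, ε, ν)` a comonad and `(F, η, μ)` a monad on `𝒞`. Let `T̃ X = Ω(F(Σ(C X)))` with
multiplication `μ̃` and unit `η̃`, and let `H X = F(Σ(C X))` with
`σ_X := μ_{Σ(C X)} ∘ F(v_{F(Σ(C X))}) ∘ F(Σ(ε_{Ω(F(Σ(C X)))})) : H(T̃X) → H X`.
Then `σ` makes `H` a right homotopical `T̃`-module: for every `X`,
(a) `σ_X ∘ H(μ̃_X) = σ_X ∘ σ_{T̃X}`, and (b) `σ_X ∘ ŝ_X = id_{H X}`, where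
`ŝ_X := F(Σ(C(Ω(η_{Σ(C X)})))) ∘ F(Σ(C(u_{C X}))) ∘ F(Σ(ν_X)) : H X → H(T̃X)`.
-/

open CategoryTheory

universe v u

namespace Stmt11

variable {𝒞 : Type u} [Category.{v} 𝒞] (Sg Om : 𝒞 ⥤ 𝒞) (adj : Sg ⊣ Om)
variable (C : Comonad 𝒞) (F : Monad 𝒞)

/-- The homotopical monad `T̃`, objectwise `T̃ X = Ω(F(Σ(C X)))`. -/
def TtObj (X : 𝒞) : 𝒞 := Om.obj (F.obj (Sg.obj (C.obj X)))

/-- The multiplication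
`μ̃_X := Ω(μ_{Σ(C X)}) ∘ Ω(F(v_{F(Σ(C X))})) ∘ Ω(F(Σ(ε_{Ω(F(Σ(C X)))})))`. -/
def μt (X : 𝒞) : TtObj Sg Om C F (TtObj Sg Om C F X) ⟶ TtObj Sg Om C F X :=
  Om.map (F.map (Sg.map (C.ε.app (TtObj Sg Om C F X)))) ≫
    Om.map (F.map (adj.counit.app (F.obj (Sg.obj (C.obj X))))) ≫
      Om.map (F.μ.app (Sg.obj (C.obj X)))

/-- The endofunctor `H`, objectwise `H X = F(Σ(C X))`. -/
def HObj (X : 𝒞) : 𝒞 := F.obj (Sg.obj (C.obj X))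

/-- The action of `H` on morphisms. -/
def HMap {X Y : 𝒞} (f : X ⟶ Y) : HObj Sg C F X ⟶ HObj Sg C F Y :=
  F.map (Sg.map (C.map f))

/-- The right action
`σ_X := μ_{Σ(C X)} ∘ F(v_{F(Σ(C X))}) ∘ F(Σ(ε_{Ω(F(Σ(C X)))})) : H(T̃X) → H X`. -/
def σ (X : 𝒞) : HObj Sg C F (TtObj Sg Om C F X) ⟶ HObj Sg C F X :=
  F.map (Sg.map (C.ε.app (TtObj Sg Om C F X))) ≫
    F.map (adj.counit.app (F.obj (Sg.obj (C.obj X)))) ≫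
      F.μ.app (Sg.obj (C.obj X))

/-- The map `ŝ_X := F(Σ(C(Ω(η_{Σ(C X)})))) ∘ F(Σ(C(u_{C X}))) ∘ F(Σ(ν_X)) : H X → H(T̃X)`. -/
def shat (X : 𝒞) : HObj Sg C F X ⟶ HObj Sg C F (TtObj Sg Om C F X) :=
  F.map (Sg.map (C.δ.app X)) ≫
    F.map (Sg.map (C.map (adj.unit.app (C.obj X)))) ≫
      F.map (Sg.map (C.map (Om.map (F.η.app (Sg.obj (C.obj X))))))

/-- The natural map `ΣCΩ Y → Y`. -/
def aux (Y : 𝒞) : Sg.obj (C.obj (Om.obj Y)) ⟶ Y :=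
  Sg.map (C.ε.app (Om.obj Y)) ≫ adj.counit.app Y

theorem aux_nat {Y Z : 𝒞} (f : Y ⟶ Z) :
    Sg.map (C.map (Om.map f)) ≫ aux Sg Om adj C Z = aux Sg Om adj C Y ≫ f := by
  have h : C.map (Om.map f) ≫ C.ε.app (Om.obj Z) = C.ε.app (Om.obj Y) ≫ Om.map f :=
    C.ε.naturality (Om.map f)
  unfold aux
  rw [← Category.assoc, ← Functor.map_comp, h, Functor.map_comp, Category.assoc, Category.assoc,
    adj.counit_naturality]

theorem aux_unit (X : 𝒞) :
    Sg.map (C.δ.app X) ≫ Sg.map (C.map (adj.unit.app (C.obj X))) ≫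
      aux Sg Om adj C (Sg.obj (C.obj X)) = 𝟙 _ := by
  have h : C.map (adj.unit.app (C.obj X)) ≫ C.ε.app (Om.obj (Sg.obj (C.obj X))) =
      C.ε.app (C.obj X) ≫ adj.unit.app (C.obj X) :=
    C.ε.naturality (adj.unit.app (C.obj X))
  have h2 : C.δ.app X ≫ C.ε.app (C.obj X) = 𝟙 _ := C.left_counit X
  unfold aux
  rw [← Functor.map_comp_assoc Sg (C.map _), h, ← Functor.map_comp_assoc, ← Category.assoc, h2,
    Category.id_comp]
  exact adj.left_triangle_components _

theorem act_assoc (P : 𝒞) :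
    F.map (Sg.map (C.map (Om.map (F.map (aux Sg Om adj C (F.obj P)) ≫ F.μ.app P)))) ≫
        F.map (aux Sg Om adj C (F.obj P)) ≫ F.μ.app P =
      (F.map (aux Sg Om adj C (F.obj (Sg.obj (C.obj (Om.obj (F.obj P)))))) ≫ F.μ.app _) ≫
        F.map (aux Sg Om adj C (F.obj P)) ≫ F.μ.app P := by
  have h : F.map (F.map (aux Sg Om adj C (F.obj P))) ≫ F.μ.app (F.obj P) =
      F.μ.app _ ≫ F.map (aux Sg Om adj C (F.obj P)) :=
    F.μ.naturality (aux Sg Om adj C (F.obj P))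
  have h2 : F.map (F.μ.app P) ≫ F.μ.app P = F.μ.app (F.obj P) ≫ F.μ.app P := F.assoc P
  rw [← Functor.map_comp_assoc, aux_nat]
  simp only [Functor.map_comp, Category.assoc]
  rw [h2, ← Category.assoc (F.map (F.map _)), h, Category.assoc]

theorem act_unit (X : 𝒞) :
    (F.map (Sg.map (C.δ.app X)) ≫
      F.map (Sg.map (C.map (adj.unit.app (C.obj X)))) ≫
      F.map (Sg.map (C.map (Om.map (F.η.app (Sg.obj (C.obj X))))))) ≫
      F.map (aux Sg Om adj C (F.obj (Sg.obj (C.obj X)))) ≫ F.μ.app (Sg.obj (C.obj X)) = 𝟙 _ := by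
  have h : F.map (F.η.app (Sg.obj (C.obj X))) ≫ F.μ.app (Sg.obj (C.obj X)) =
      𝟙 (F.obj (Sg.obj (C.obj X))) :=
    F.right_unit _
  have n : Sg.map (C.map (Om.map (F.η.app (Sg.obj (C.obj X))))) ≫
      aux Sg Om adj C (F.obj (Sg.obj (C.obj X))) =
      aux Sg Om adj C (Sg.obj (C.obj X)) ≫ F.η.app (Sg.obj (C.obj X)) :=
    aux_nat Sg Om adj C (F.η.app (Sg.obj (C.obj X)))
  simp only [Category.assoc]
  rw [← Functor.map_comp_assoc F.toFunctor (Sg.map (C.map (Om.map _))), n,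
    Functor.map_comp, Category.assoc, h]
  erw [Category.comp_id]
  rw [← Functor.map_comp, ← Functor.map_comp,
    aux_unit, CategoryTheory.Functor.map_id]

theorem σ_eq (X : 𝒞) : σ Sg Om adj C F X =
    F.map (aux Sg Om adj C (F.obj (Sg.obj (C.obj X)))) ≫ F.μ.app (Sg.obj (C.obj X)) := by
  unfold aux
  rw [Functor.map_comp, Category.assoc]
  rfl

theorem μt_eq (X : 𝒞) : μt Sg Om adj C F X = Om.map (σ Sg Om adj C F X) := by
  unfold σ
  erw [Functor.map_comp, Functor.map_comp]
  rfl

/-- `σ` makes `H = F∘Σ∘C` a right homotopical `T̃`-module: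
(a) `σ_X ∘ H(μ̃_X) = σ_X ∘ σ_{T̃X}` and (b) `σ_X ∘ ŝ_X = id_{H X}`. -/
theorem H_is_right_module (X : 𝒞) :
    (HMap Sg C F (μt Sg Om adj C F X) ≫ σ Sg Om adj C F X
      = σ Sg Om adj C F (TtObj Sg Om C F X) ≫ σ Sg Om adj C F X) ∧
    (shat Sg Om adj C F X ≫ σ Sg Om adj C F X = 𝟙 (HObj Sg C F X)) := by
  rw [μt_eq, σ_eq, σ_eq]
  exact ⟨act_assoc Sg Om adj C F (Sg.obj (C.obj X)), act_unit Sg Om adj C F X⟩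

end Stmt11
end

section
/- With notation as in the context, the Freudenthal suspension map coaugments the cobar construction: for every object X of 𝒞, letting c_X : C X → G(Σ(C X)) be the composite C(Ω(η_{Σ(C X)})) ∘ C(u_{C X}) ∘ ν_X : C X → C(C X) → C(Ω(Σ(C X))) → C(Ω(F(Σ(C X)))), and letting m_X : Σ(C X) → K̃(Σ(C X)) be the composite Σ(C(Ω(η_{Σ(C X)}))) ∘ Σ(C(u_{C X})) ∘ Σ(ν_X), one has ρ_{Σ(C X)} ∘ c_X = G(m_X) ∘ c_X as maps C X → G(K̃(Σ(C X))). (In the paper this is the claim that the Freudenthal suspension map augments 𝔠(Σ̃ʳX), yielding the coaugmented cosimplicial Freudenthal resolution.) -/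
/-!
STATEMENT 12: Let `Σ ⊣ Ω` be an adjunction of endofunctors of `𝒞` (unit `u`, counit `v`),
`(C, ε, ν)` a comonad and `(F, η, μ)` a monad on `𝒞`. With `K̃ X = Σ(C(Ω(F X)))`,
`G X = C(Ω(F X))` and the coaction `ρ` as in the paper, the Freudenthal suspension map
coaugments the cobar construction: for every object `X`, letting
`c_X := C(Ω(η_{Σ(C X)})) ∘ C(u_{C X}) ∘ ν_X : C X → G(Σ(C X))` and
`m_X := Σ(C(Ω(η_{Σ(C X)}))) ∘ Σ(C(u_{C X})) ∘ Σ(ν_X) : Σ(C X) → K̃(Σ(C X))`, one has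
`ρ_{Σ(C X)} ∘ c_X = G(m_X) ∘ c_X` as maps `C X → G(K̃(Σ(C X)))`.
-/

open CategoryTheory

universe v u

namespace Stmt12

variable {𝒞 : Type u} [Category.{v} 𝒞] (Sg Om : 𝒞 ⥤ 𝒞) (adj : Sg ⊣ Om)
variable (C : Comonad 𝒞) (F : Monad 𝒞)

/-- The homotopical comonad `K̃`, objectwise `K̃ X = Σ(C(Ω(F X)))`. -/
def KtObj (X : 𝒞) : 𝒞 := Sg.obj (C.obj (Om.obj (F.obj X)))

/-- The endofunctor `G`, objectwise `G X = C(Ω(F X))`. -/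
def GObj (X : 𝒞) : 𝒞 := C.obj (Om.obj (F.obj X))

/-- The action of `G` on morphisms. -/
def GMap {X Y : 𝒞} (f : X ⟶ Y) : GObj Om C F X ⟶ GObj Om C F Y :=
  C.map (Om.map (F.map f))

/-- The right coaction
`ρ_X := C(Ω(η_{Σ(C(Ω(F X)))})) ∘ C(u_{C(Ω(F X))}) ∘ ν_{Ω(F X)} : G X → G(K̃X)`. -/
def ρ (X : 𝒞) : GObj Om C F X ⟶ GObj Om C F (KtObj Sg Om C F X) :=
  C.δ.app (Om.obj (F.obj X)) ≫
    C.map (adj.unit.app (C.obj (Om.obj (F.obj X)))) ≫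
      C.map (Om.map (F.η.app (KtObj Sg Om C F X)))

/-- The coaugmentation `c_X := C(Ω(η_{Σ(C X)})) ∘ C(u_{C X}) ∘ ν_X : C X → G(Σ(C X))`. -/
def c (X : 𝒞) : C.obj X ⟶ GObj Om C F (Sg.obj (C.obj X)) :=
  C.δ.app X ≫
    C.map (adj.unit.app (C.obj X)) ≫
      C.map (Om.map (F.η.app (Sg.obj (C.obj X))))

/-- The Freudenthal suspension map
`m_X := Σ(C(Ω(η_{Σ(C X)}))) ∘ Σ(C(u_{C X})) ∘ Σ(ν_X) : Σ(C X) → K̃(Σ(C X))`. -/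
def m (X : 𝒞) : Sg.obj (C.obj X) ⟶ KtObj Sg Om C F (Sg.obj (C.obj X)) :=
  Sg.map (C.δ.app X) ≫
    Sg.map (C.map (adj.unit.app (C.obj X))) ≫
      Sg.map (C.map (Om.map (F.η.app (Sg.obj (C.obj X)))))

theorem coaug_aux {𝒞 : Type u} [Category.{v} 𝒞] (C : Comonad 𝒞) (T : 𝒞 ⥤ 𝒞) (h : 𝟭 𝒞 ⟶ T)
    (X : 𝒞) :
    (C.δ.app X ≫ C.map (h.app (C.obj X))) ≫
        C.δ.app (T.obj (C.obj X)) ≫ C.map (h.app (C.obj (T.obj (C.obj X)))) =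
      (C.δ.app X ≫ C.map (h.app (C.obj X))) ≫
        C.map (T.map (C.δ.app X ≫ C.map (h.app (C.obj X)))) := by
  have key : C.map (h.app (C.obj X)) ≫ C.δ.app (T.obj (C.obj X)) =
      C.δ.app (C.obj X) ≫ C.map (C.map (h.app (C.obj X))) := C.δ.naturality (h.app (C.obj X))
  have hn : h.app (C.obj X) ≫ T.map (C.δ.app X ≫ C.map (h.app (C.obj X))) =
      (C.δ.app X ≫ C.map (h.app (C.obj X))) ≫ h.app (C.obj (T.obj (C.obj X))) :=
    (h.naturality (C.δ.app X ≫ C.map (h.app (C.obj X)))).symm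
  have coassoc : C.δ.app X ≫ C.map (C.δ.app X) = C.δ.app X ≫ C.δ.app (C.obj X) :=
    C.coassoc X
  calc _ = C.δ.app X ≫ (C.map (h.app (C.obj X)) ≫ C.δ.app (T.obj (C.obj X))) ≫
        C.map (h.app (C.obj (T.obj (C.obj X)))) := by simp only [Category.assoc]
    _ = (C.δ.app X ≫ C.δ.app (C.obj X)) ≫ C.map (C.map (h.app (C.obj X))) ≫
        C.map (h.app (C.obj (T.obj (C.obj X)))) := by rw [key]; simp only [Category.assoc]
    _ = C.δ.app X ≫ C.map
        ((C.δ.app X ≫ C.map (h.app (C.obj X))) ≫ h.app (C.obj (T.obj (C.obj X)))) := by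
      rw [← coassoc, C.map_comp, C.map_comp]; simp only [Category.assoc]
    _ = _ := by rw [← hn, C.map_comp, Category.assoc]

/-- The Freudenthal suspension map coaugments the cobar construction:
`ρ_{Σ(C X)} ∘ c_X = G(m_X) ∘ c_X`. -/
theorem freudenthal_coaugments (X : 𝒞) :
    c Sg Om adj C F X ≫ ρ Sg Om adj C F (Sg.obj (C.obj X))
      = c Sg Om adj C F X ≫ GMap Om C F (m Sg Om adj C F X) := by
  have key := coaug_aux C (Sg ⋙ F.toFunctor ⋙ Om)
    (adj.unit ≫ Functor.whiskerRight (Functor.whiskerLeft Sg F.η) Om) X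
  simp only [NatTrans.comp_app, Functor.whiskerRight_app, Functor.whiskerLeft_app,
    Functor.comp_map, Functor.map_comp] at key
  unfold c ρ GMap m KtObj GObj
  simp only [Functor.map_comp]
  exact key


end Stmt12
end

section
/- With notation as in the context, the dual Freudenthal suspension map augments the bar construction: for every object Y of 𝒞, letting a_Y : H(Ω(F Y)) → F Y be the composite μ_Y ∘ F(v_{F Y}) ∘ F(Σ(ε_{Ω(F Y)})) : F(Σ(C(Ω(F Y)))) → F(Σ(Ω(F Y))) → F(F Y) → F Y, and letting m_Y : T̃(Ω(F Y)) → Ω(F Y) be the composite Ω(μ_Y) ∘ Ω(F(v_{F Y})) ∘ Ω(F(Σ(ε_{Ω(F Y)}))), one has a_Y ∘ σ_{Ω(F Y)} = a_Y ∘ H(m_Y) as maps H(T̃(Ω(F Y))) → F Y. (In the paper this is the claim that the dual Freudenthal suspension map coaugments 𝔟(Ω̃ʳY), yielding the augmented simplicial dual Freudenthal resolution.) -/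
/-!
STATEMENT 13: Let `Σ ⊣ Ω` be an adjunction of endofunctors of `𝒞` (unit `u`, counit `v`),
`(C, ε, ν)` a comonad and `(F, η, μ)` a monad on `𝒞`. With `T̃ X = Ω(F(Σ(C X)))`,
`H X = F(Σ(C X))` and the action `σ` as in the paper, the dual Freudenthal suspension map
augments the bar construction: for every object `Y`, letting
`a_Y := μ_Y ∘ F(v_{F Y}) ∘ F(Σ(ε_{Ω(F Y)})) : H(Ω(F Y)) → F Y` and
`m_Y := Ω(μ_Y) ∘ Ω(F(v_{F Y})) ∘ Ω(F(Σ(ε_{Ω(F Y)}))) : T̃(Ω(F Y)) → Ω(F Y)`, one has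
`a_Y ∘ σ_{Ω(F Y)} = a_Y ∘ H(m_Y)` as maps `H(T̃(Ω(F Y))) → F Y`.
-/

open CategoryTheory

universe v u

namespace Stmt13

variable {𝒞 : Type u} [Category.{v} 𝒞] (Sg Om : 𝒞 ⥤ 𝒞) (adj : Sg ⊣ Om)
variable (C : Comonad 𝒞) (F : Monad 𝒞)

/-- The homotopical monad `T̃`, objectwise `T̃ X = Ω(F(Σ(C X)))`. -/
def TtObj (X : 𝒞) : 𝒞 := Om.obj (F.obj (Sg.obj (C.obj X)))

/-- The endofunctor `H`, objectwise `H X = F(Σ(C X))`. -/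
def HObj (X : 𝒞) : 𝒞 := F.obj (Sg.obj (C.obj X))

/-- The action of `H` on morphisms. -/
def HMap {X Y : 𝒞} (f : X ⟶ Y) : HObj Sg C F X ⟶ HObj Sg C F Y :=
  F.map (Sg.map (C.map f))

/-- The right action
`σ_X := μ_{Σ(C X)} ∘ F(v_{F(Σ(C X))}) ∘ F(Σ(ε_{Ω(F(Σ(C X)))})) : H(T̃X) → H X`. -/
def σ (X : 𝒞) : HObj Sg C F (TtObj Sg Om C F X) ⟶ HObj Sg C F X :=
  F.map (Sg.map (C.ε.app (TtObj Sg Om C F X))) ≫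
    F.map (adj.counit.app (F.obj (Sg.obj (C.obj X)))) ≫
      F.μ.app (Sg.obj (C.obj X))

/-- The augmentation `a_Y := μ_Y ∘ F(v_{F Y}) ∘ F(Σ(ε_{Ω(F Y)})) : H(Ω(F Y)) → F Y`. -/
def a (Y : 𝒞) : HObj Sg C F (Om.obj (F.obj Y)) ⟶ F.obj Y :=
  F.map (Sg.map (C.ε.app (Om.obj (F.obj Y)))) ≫
    F.map (adj.counit.app (F.obj Y)) ≫
      F.μ.app Y

/-- The dual Freudenthal suspension map
`m_Y := Ω(μ_Y) ∘ Ω(F(v_{F Y})) ∘ Ω(F(Σ(ε_{Ω(F Y)}))) : T̃(Ω(F Y)) → Ω(F Y)`. -/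
def m (Y : 𝒞) : TtObj Sg Om C F (Om.obj (F.obj Y)) ⟶ Om.obj (F.obj Y) :=
  Om.map (F.map (Sg.map (C.ε.app (Om.obj (F.obj Y))))) ≫
    Om.map (F.map (adj.counit.app (F.obj Y))) ≫
      Om.map (F.μ.app Y)

/-- The dual Freudenthal suspension map augments the bar construction:
`a_Y ∘ σ_{Ω(F Y)} = a_Y ∘ H(m_Y)`. -/
theorem dual_freudenthal_augments (Y : 𝒞) :
    σ Sg Om adj C F (Om.obj (F.obj Y)) ≫ a Sg Om adj C F Y
      = HMap Sg C F (m Sg Om adj C F Y) ≫ a Sg Om adj C F Y := by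
  have key : ∀ {A : 𝒞} (k : A ⟶ F.obj Y),
      F.map (Sg.map (C.ε.app (Om.obj (F.obj A)))) ≫ F.map (adj.counit.app (F.obj A)) ≫
        F.μ.app A ≫ F.map k ≫ F.μ.app Y =
      F.map (Sg.map (C.map (Om.map (F.map k ≫ F.μ.app Y)))) ≫
        F.map (Sg.map (C.ε.app (Om.obj (F.obj Y)))) ≫
          F.map (adj.counit.app (F.obj Y)) ≫ F.μ.app Y := by
    intro A k
    have h1 : F.μ.app A ≫ F.map k ≫ F.μ.app Y
        = F.map (F.map k ≫ F.μ.app Y) ≫ F.μ.app Y := by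
      have hn := F.μ.naturality k
      have ha := F.assoc Y
      simp only [Functor.comp_map] at hn
      rw [← Category.assoc, ← hn, Functor.map_comp, Category.assoc, Category.assoc]
      exact congrArg _ ha.symm
    rw [h1]
    generalize F.map k ≫ F.μ.app Y = g
    have he := C.ε.naturality (Om.map g)
    have hv := adj.counit.naturality g
    simp only [Functor.comp_map, Functor.id_map] at he hv
    have h2 : Sg.map (C.ε.app (Om.obj (F.obj A))) ≫ adj.counit.app (F.obj A) ≫ g
        = Sg.map (C.map (Om.map g)) ≫ Sg.map (C.ε.app (Om.obj (F.obj Y))) ≫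
          adj.counit.app (F.obj Y) := by
      rw [← Category.assoc (Sg.map (C.map _)), ← Functor.map_comp]
      erw [he]
      rw [Functor.map_comp, Category.assoc]
      exact congrArg _ hv.symm
    have h3 := congrArg (fun t => F.map t ≫ F.μ.app Y) h2
    simp only [Functor.map_comp, Category.assoc] at h3
    exact h3
  have h := key (Sg.map (C.ε.app (Om.obj (F.obj Y))) ≫ adj.counit.app (F.obj Y))
  simp only [Functor.map_comp, Category.assoc] at h
  unfold σ a HMap m TtObj HObj
  simp only [Functor.map_comp, Category.assoc]
  exact h

end Stmt13
end
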